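/- If x : ℕ → Fin 2 is recurrent but not uniformly recurrent, then liminf_{n→∞} p*_x(n)/(n · ln n) > 0; in particular there exist c > 0 and N such that p*_x(n) ≥ c · n · ln n for all n ≥ N. -/

import Mathlib

open Set

abbrev Seq2 := ℕ → Fin 2

def patLang (x : Seq2) (τ : Finset ℕ) : Set ((s : τ) → Fin 2) :=
  {w | ∃ m : ℕ, ∀ s : τ, w s = x (m + (s : ℕ))}

noncomputable def pstar (x : Seq2) (n : ℕ) : ℕ :=
  sSup {c : ℕ | ∃ τ : Finset ℕ, τ.card = n ∧ (patLang x τ).ncard = c}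

def Recurrent (x : Seq2) : Prop :=
  ∀ L : ℕ, ∃ M : ℕ, 1 ≤ M ∧ ∀ i < L, x i = x (M + i)

def Syndetic (S : Set ℕ) : Prop :=
  ∃ g : ℕ, ∀ n : ℕ, ∃ m ∈ S, n ≤ m ∧ m < n + g

def UniformlyRecurrent (x : Seq2) : Prop :=
  ∀ L : ℕ, Syndetic {M : ℕ | 1 ≤ M ∧ ∀ i < L, x i = x (M + i)}

/-!
Marking the occurrences of a prefix whose return times are not syndetic turns `x` into a recurrent
word `y` with arbitrarily long runs of one letter `z` (here `False`). If `F τ` is the number of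
patterns of `y` along the window `τ`, then some shift `M` gives
`F (τ ∪ (M + τ)) ≥ 2 * F τ + |τ| - 1`. To see this, regard a pattern along `τ ∪ (M + τ)` as a pair
of patterns along `τ`. Every pattern is the second component of a pair; the constant pattern `z` is
the second component of `F τ` pairs, because `M` starts a run long enough for the first component to
be arbitrary; and the `|τ|` patterns whose first letter other than `z` is the one ending that run
are second components of at least two pairs each. Iterating yields windows with `2 ^ k` elements and
at least `k * 2 ^ k / 2` patterns.
-/

section Counting

variable {ι γ δ : Type*}

theorem ncard_range_le_of_factorsThrough {f : ι → γ} {g : ι → δ} (hf : (range f).Finite)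
    (h : g.FactorsThrough f) : (range g).ncard ≤ (range f).ncard := by
  rcases isEmpty_or_nonempty ι with _ | ⟨⟨i⟩⟩
  · simp only [range_eq_empty, ncard_empty, le_refl]
  · have : Nonempty δ := ⟨g i⟩
    obtain ⟨e, rfl⟩ := (Function.factorsThrough_iff g).1 h
    rw [range_comp]
    exact ncard_image_le hf

theorem exists_forall_exists_lt_apply_eq [Finite γ] (f : ℕ → γ) :
    ∃ B, ∀ m, ∃ n < B, f n = f m := by
  obtain ⟨b, hb⟩ := (finite_range (rangeSplitting f)).bddAbove
  exact ⟨b + 1, fun m => ⟨rangeSplitting f ⟨f m, mem_range_self m⟩,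
    Nat.lt_succ_of_le (hb (mem_range_self _)), apply_rangeSplitting f _⟩⟩

theorem card_fiber_add_card_image_add_card_le [DecidableEq δ] (Q : Finset γ) (f : γ → δ) {z : δ}
    {E : Finset δ} (hz : z ∉ E) (hE : ∀ w ∈ E, 1 < (Q.filter (f · = w)).card) :
    (Q.filter (f · = z)).card + (Q.image f).card + E.card ≤ Q.card + 1 := by
  have hsub : E ⊆ (Q.image f).erase z := fun w hw => by
    obtain ⟨q, hq⟩ := Finset.card_pos.1 (zero_lt_one.trans (hE w hw))
    obtain ⟨hqQ, rfl⟩ := Finset.mem_filter.1 hq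
    exact Finset.mem_erase.2 ⟨ne_of_mem_of_not_mem hw hz, Finset.mem_image_of_mem f hqQ⟩
  have hmaps : ∀ q ∈ Q, f q ∈ insert z ((Q.image f).erase z) := fun q hq =>
    Finset.mem_insert.2 (or_iff_not_imp_left.2 fun h =>
      Finset.mem_erase.2 ⟨h, Finset.mem_image_of_mem f hq⟩)
  have hfiber : ∀ w ∈ (Q.image f).erase z,
      1 + (if w ∈ E then 1 else 0) ≤ (Q.filter (f · = w)).card := fun w hw => by
    split_ifs with hwE
    · exact hE w hwE
    · obtain ⟨q, hq, rfl⟩ := Finset.mem_image.1 (Finset.mem_of_mem_erase hw)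
      exact Finset.card_pos.2 ⟨q, Finset.mem_filter.2 ⟨hq, rfl⟩⟩
  have hsum : (Q.filter (f · = z)).card + (((Q.image f).erase z).card + E.card) ≤ Q.card := by
    rw [Finset.card_eq_sum_card_fiberwise hmaps, Finset.sum_insert (Finset.notMem_erase _ _)]
    gcongr
    calc ((Q.image f).erase z).card + E.card
        = ∑ w ∈ (Q.image f).erase z, (1 + if w ∈ E then 1 else 0) := by
          rw [Finset.sum_add_distrib, Finset.sum_const, smul_eq_mul, mul_one,
            Finset.sum_boole, Finset.filter_mem_eq_inter, Finset.inter_eq_right.2 hsub, Nat.cast_id]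
      _ ≤ _ := Finset.sum_le_sum hfiber
  have := Finset.pred_card_le_card_erase (s := Q.image f) (a := z)
  omega

theorem ncard_fiber_add_ncard_image_add_ncard_le {Q : Set γ} (hQ : Q.Finite) (f : γ → δ) {z : δ}
    {E : Set δ} (hz : z ∉ E) (hE : ∀ w ∈ E, (Q ∩ f ⁻¹' {w}).Nontrivial) :
    (Q ∩ f ⁻¹' {z}).ncard + (f '' Q).ncard + E.ncard ≤ Q.ncard + 1 := by
  classical
  have hEfin : E.Finite := (hQ.image f).subset fun w hw => by
    obtain ⟨q, hqQ, hqw⟩ := (hE w hw).nonempty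
    exact ⟨q, hqQ, hqw⟩
  lift Q to Finset γ using hQ
  lift E to Finset δ using hEfin
  have hfiber (w : δ) : (Q : Set γ) ∩ f ⁻¹' {w} = (Q.filter (f · = w) : Finset γ) :=
    (Finset.coe_filter _ _).symm
  simp only [hfiber, ← Finset.coe_image, ncard_coe_finset] at hE ⊢
  exact card_fiber_add_card_image_add_card_le Q f hz fun w hw =>
    Finset.one_lt_card_iff_nontrivial.2 (hE w hw)

end Counting

section Words

variable {α β : Type*}

/-- Recurrence of a word over an arbitrary alphabet; it is `Recurrent` over `Fin 2`. -/
def IsRecurrentWord (x : ℕ → α) : Prop :=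
  ∀ L : ℕ, ∃ M : ℕ, 1 ≤ M ∧ ∀ i < L, x i = x (M + i)

/-- Uniform recurrence of a word over an arbitrary alphabet; it is `UniformlyRecurrent` over
`Fin 2`. -/
def IsUniformlyRecurrentWord (x : ℕ → α) : Prop :=
  ∀ L : ℕ, Syndetic {M : ℕ | 1 ≤ M ∧ ∀ i < L, x i = x (M + i)}

/-- The pattern of the word `x` seen through the window `τ` shifted by `m`. -/
def windowPattern (x : ℕ → α) (τ : Finset ℕ) (m : ℕ) (s : τ) : α :=
  x (m + s)

/-- The `τ`-language of the word `x`; it is `patLang` over `Fin 2`. -/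
def patternSet (x : ℕ → α) (τ : Finset ℕ) : Set (τ → α) :=
  range (windowPattern x τ)

/-- The maximal pattern complexity of a word over an arbitrary alphabet; it is `pstar` over `Fin 2`.
The set of cardinalities is bounded when the alphabet is finite; otherwise `sSup` and `ncard` may
take junk values. -/
noncomputable def maxPatternComplexity (x : ℕ → α) (n : ℕ) : ℕ :=
  sSup {c : ℕ | ∃ τ : Finset ℕ, τ.card = n ∧ (patternSet x τ).ncard = c}

/-- The sliding block code of window length `L` and local rule `φ`. -/
def blockCode {L : ℕ} (φ : (Fin L → α) → β) (x : ℕ → α) (m : ℕ) : β :=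
  φ fun i => x (m + i)

/-- The word `x` has arbitrarily long blocks of the letter `z` which are followed by another
letter. -/
def HasLongRuns (x : ℕ → α) (z : α) : Prop :=
  ∀ V : ℕ, ∃ m : ℕ, (∀ i < V, x (m + i) = z) ∧ x (m + V) ≠ z

theorem ncard_patternSet_mono [Finite α] (x : ℕ → α) {σ τ : Finset ℕ} (h : σ ⊆ τ) :
    (patternSet x σ).ncard ≤ (patternSet x τ).ncard :=
  ncard_range_le_of_factorsThrough (toFinite _) fun _ _ hmn =>
    funext fun s => congrFun hmn ⟨s, h s.2⟩

theorem ncard_patternSet_le_maxPatternComplexity [Finite α] (x : ℕ → α) {τ : Finset ℕ} {n : ℕ}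
    (h : τ.card ≤ n) : (patternSet x τ).ncard ≤ maxPatternComplexity x n := by
  obtain ⟨σ, hτσ, hσ⟩ := Infinite.exists_superset_card_eq τ n h
  refine (ncard_patternSet_mono x hτσ).trans (le_csSup ⟨Nat.card α ^ n, ?_⟩ ⟨σ, hσ, rfl⟩)
  rintro _ ⟨ρ, rfl, rfl⟩
  simpa only [Nat.card_fun, Nat.card_eq_fintype_card, Fintype.card_coe]
    using ncard_le_card (patternSet x ρ)

open Pointwise in
theorem ncard_patternSet_blockCode_le [Finite α] {L : ℕ} (φ : (Fin L → α) → β) (x : ℕ → α)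
    (τ : Finset ℕ) :
    (patternSet (blockCode φ x) τ).ncard ≤ (patternSet x (τ + Finset.range L)).ncard := by
  refine ncard_range_le_of_factorsThrough (toFinite _) fun m n hmn => funext fun s =>
    congrArg φ (funext fun i => ?_)
  have := congrFun hmn ⟨s + i, Finset.add_mem_add s.2 (Finset.mem_range.2 i.2)⟩
  simpa only [windowPattern, Nat.add_assoc] using this

namespace IsRecurrentWord

variable {x : ℕ → α}

theorem exists_ge (hx : IsRecurrentWord x) (ℓ S : ℕ) :
    ∃ N ≥ S, ∀ i < ℓ, x (N + i) = x i := by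
  induction S with
  | zero =>
    obtain ⟨M, -, hM⟩ := hx ℓ
    exact ⟨M, Nat.zero_le _, fun i hi => (hM i hi).symm⟩
  | succ S ih =>
    obtain ⟨N, hSN, hN⟩ := ih
    obtain ⟨M, hM₁, hM⟩ := hx (N + ℓ)
    refine ⟨M + N, by omega, fun i hi => ?_⟩
    rw [Nat.add_assoc, ← hM (N + i) (by omega), hN i hi]

theorem blockCode (hx : IsRecurrentWord x) {L : ℕ} (φ : (Fin L → α) → β) :
    IsRecurrentWord (blockCode φ x) := by
  intro ℓ
  obtain ⟨M, hM₁, hM⟩ := hx (ℓ + L)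
  refine ⟨M, hM₁, fun i hi => congrArg φ (funext fun j => ?_)⟩
  rw [hM (i + j) (by omega), Nat.add_assoc]

/-- The gap `q` does not depend on the factor: every factor of length `ℓ` occurs in one long prefix,
and `q` is a return time of that prefix. -/
theorem exists_common_gap [Finite α] (hx : IsRecurrentWord x) (ℓ : ℕ) :
    ∃ q ≥ 1, ∀ m S, ∃ p ≥ S, ∀ i < ℓ, x (p + i) = x (m + i) ∧ x (p + q + i) = x (m + i) := by
  obtain ⟨B, hB⟩ := exists_forall_exists_lt_apply_eq fun m (i : Fin ℓ) => x (m + i)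
  obtain ⟨q, hq₁, hq⟩ := hx.exists_ge (B + ℓ) 1
  refine ⟨q, hq₁, fun m S => ?_⟩
  obtain ⟨n, hnB, hn⟩ := hB m
  obtain ⟨N, hNS, hN⟩ := hx.exists_ge (B + q + ℓ) S
  refine ⟨N + n, by omega, fun i hi => ?_⟩
  rw [← congrFun hn ⟨i, hi⟩]
  constructor
  · rw [Nat.add_assoc, hN (n + i) (by omega)]
  · rw [show N + n + q + i = N + (q + (n + i)) by omega, hN (q + (n + i)) (by omega),
      hq (n + i) (by omega)]

end IsRecurrentWord

theorem hasLongRuns_of_frequently_ne {x : ℕ → α} {z : α} (hne : ∀ n, ∃ p ≥ n, x p ≠ z)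
    (hblock : ∀ V, ∃ n, ∀ i < V, x (n + i) = z) : HasLongRuns x z := by
  classical
  intro V
  obtain ⟨n, hn⟩ := hblock V
  obtain ⟨hnp, hp⟩ := Nat.find_spec (hne n)
  have hmin : ∀ i, n ≤ i → i < Nat.find (hne n) → x i = z := fun i hni hi =>
    not_not.1 fun h => Nat.find_min (hne n) hi ⟨hni, h⟩
  set p := Nat.find (hne n)
  have hVp : n + V ≤ p := by
    by_contra! hlt
    exact hp (by simpa only [Nat.add_sub_cancel' hnp] using hn (p - n) (by omega))
  refine ⟨p - V, fun i hi => hmin _ (by omega) (by omega), ?_⟩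
  rwa [Nat.sub_add_cancel (by omega)]

/-- The word over `Prop` which marks the occurrences in `x` of its prefix of length `L`. -/
def prefixOccurrence (x : ℕ → α) (L : ℕ) : ℕ → Prop :=
  blockCode (fun w : Fin L → α => w = fun i : Fin L => x i) x

theorem prefixOccurrence_iff {x : ℕ → α} {L m : ℕ} :
    prefixOccurrence x L m ↔ ∀ i < L, x i = x (m + i) :=
  ⟨fun h i hi => (congrFun h ⟨i, hi⟩).symm, fun h => funext fun i => (h i i.2).symm⟩

theorem IsRecurrentWord.exists_hasLongRuns_prefixOccurrence {x : ℕ → α} (hx : IsRecurrentWord x)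
    (hnur : ¬ IsUniformlyRecurrentWord x) : ∃ L, HasLongRuns (prefixOccurrence x L) False := by
  simp only [IsUniformlyRecurrentWord, Syndetic, not_forall, not_exists, not_and] at hnur
  obtain ⟨L, hL⟩ := hnur
  refine ⟨L, hasLongRuns_of_frequently_ne (fun n => ?_) fun V => ?_⟩
  · obtain ⟨p, hnp, hp⟩ := hx.exists_ge L n
    exact ⟨p, hnp, fun h => h ▸ prefixOccurrence_iff.2 fun i hi => (hp i hi).symm⟩
  · obtain ⟨n, hn⟩ := hL (V + 1)
    refine ⟨n + 1, fun i hi => eq_false fun h => ?_⟩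
    exact hn (n + 1 + i) ⟨by omega, prefixOccurrence_iff.1 h⟩ (by omega) (by omega)

/-- A shift `M` which separates patterns of `x` along windows contained in `[0, T]`: the word reads
`z` from position `M` up to the other letter at position `M + (a + T)`, which is at least `B + T`
places further on; the factor of length `2 * T + 1` centred at that letter occurs again centred at
`M + (e + T)`; and the letters `M` places before the two centres differ. -/
structure IsSeparatingShift (x : ℕ → α) (z : α) (B T M a e : ℕ) : Prop where
  lt_shift : T < M
  le_length : B ≤ a
  run : ∀ i < a + T, x (M + i) = z
  run_end : x (M + (a + T)) ≠ z
  recur : ∀ i ≤ 2 * T, x (M + (e + i)) = x (M + (a + i))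
  separated : x (e + T) ≠ x (a + T)

/-- The factor around the end of a run recurs at two places whose distance is a common gap `q`.
Compare the letter `x (e + T)`, which lies `d` places before the centre of the first of them, with
the letter that ends another run, of length at least `q`, and with the `z` found `q` places before
that end: one of the two differs from it, giving the shift `d` or `d + q`. -/
theorem IsRecurrentWord.exists_isSeparatingShift [Finite α] {x : ℕ → α} {z : α}
    (hx : IsRecurrentWord x) (hz : HasLongRuns x z) (B T : ℕ) :
    ∃ M a e, IsSeparatingShift x z B T M a e := by
  obtain ⟨q, hq₁, hq⟩ := hx.exists_common_gap (2 * T + 1)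
  obtain ⟨m₁, hrun₁, hend₁⟩ := hz (B + q + T)
  let b := m₁ + B + q
  obtain ⟨m₂, hrun₂, hend₂⟩ := hz (b + 2 * T + 1)
  let d := m₂ + T + 1
  obtain ⟨p, hdp, hp⟩ := hq (d + b) d
  obtain ⟨e, rfl⟩ := Nat.exists_eq_add_of_le hdp
  have hrun : ∀ i < b + T, x (d + i) = z := fun i hi => by
    rw [show d + i = m₂ + (T + 1 + i) by omega]
    exact hrun₂ _ (by omega)
  have hend : x (d + (b + T)) ≠ z := by
    rwa [show d + (b + T) = m₂ + (b + 2 * T + 1) by omega]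
  by_cases hsep : x (e + T) = x (b + T)
  · refine ⟨d + q, b - q, e, by omega, by omega, fun i hi => ?_, ?_, fun i hi => ?_, ?_⟩
    · rw [Nat.add_assoc]
      exact hrun (q + i) (by omega)
    · rwa [show d + q + (b - q + T) = d + (b + T) by omega]
    · rw [show d + q + (e + i) = d + e + q + i by omega,
        show d + q + (b - q + i) = d + b + i by omega]
      exact (hp i (by omega)).2
    · rw [hsep, show b - q + T = m₁ + (B + T) by omega, hrun₁ _ (by omega)]
      rwa [show b + T = m₁ + (B + q + T) by omega]
  · refine ⟨d, b, e, by omega, by omega, hrun, hend, fun i hi => ?_, hsep⟩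
    rw [← Nat.add_assoc, ← Nat.add_assoc]
    exact (hp i (by omega)).1

theorem card_union_image_add {τ : Finset ℕ} {M : ℕ} (hM : ∀ s ∈ τ, s < M) :
    (τ ∪ τ.image (M + ·)).card = 2 * τ.card := by
  rw [Finset.card_union_of_disjoint, Finset.card_image_of_injective _ (add_right_injective M),
    two_mul]
  refine Finset.disjoint_left.2 fun s hs hs' => ?_
  obtain ⟨t, -, rfl⟩ := Finset.mem_image.1 hs'
  exact (Nat.le_add_right M t).not_gt (hM _ hs)

/-- The patterns of `x` along `τ` at two positions at distance `M`; such a pair encodes a pattern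
along `τ ∪ (M + τ)`. -/
def windowPair (x : ℕ → α) (τ : Finset ℕ) (M m : ℕ) : (τ → α) × (τ → α) :=
  (windowPattern x τ m, windowPattern x τ (M + m))

theorem ncard_range_windowPair_le [Finite α] (x : ℕ → α) (τ : Finset ℕ) (M : ℕ) :
    (range (windowPair x τ M)).ncard ≤ (patternSet x (τ ∪ τ.image (M + ·))).ncard := by
  refine ncard_range_le_of_factorsThrough (toFinite _) fun m n hmn => Prod.ext
    (funext fun s => congrFun hmn ⟨s, Finset.mem_union_left _ s.2⟩) (funext fun s => ?_)
  have := congrFun hmn ⟨M + s, Finset.mem_union_right _ (Finset.mem_image_of_mem _ s.2)⟩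
  simpa only [windowPair, windowPattern, Nat.add_left_comm, Nat.add_assoc] using this

theorem IsRecurrentWord.image_snd_range_windowPair {x : ℕ → α} (hx : IsRecurrentWord x)
    (τ : Finset ℕ) (M : ℕ) : Prod.snd '' range (windowPair x τ M) = patternSet x τ := by
  refine subset_antisymm ?_ ?_
  · rintro _ ⟨_, ⟨m, rfl⟩, rfl⟩
    exact mem_range_self (M + m)
  · rintro _ ⟨m, rfl⟩
    obtain ⟨N, hMN, hN⟩ := hx.exists_ge (m + τ.sup id + 1) M
    refine ⟨_, mem_range_self (N - M + m), funext fun s => ?_⟩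
    have hs : (s : ℕ) ≤ τ.sup id := Finset.le_sup (f := id) s.2
    simp only [windowPair, windowPattern]
    rw [show M + (N - M + m) + s = N + (m + s) by omega, hN _ (by omega)]

/-- The pattern of `x` along `τ` whose entry at `t` is the letter at position `M + (a + T)`. The
window has to lie in `[0, T]`, since `T - t` is truncated. -/
def endPattern (x : ℕ → α) (τ : Finset ℕ) (T M a : ℕ) (t : τ) : τ → α :=
  windowPattern x τ (M + (a + (T - t)))

namespace IsSeparatingShift

variable {x : ℕ → α} {z : α} {B T M a e : ℕ} {τ : Finset ℕ}

theorem ncard_patternSet_le_ncard_fiber [Finite α] (h : IsSeparatingShift x z B T M a e)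
    (hT : ∀ s ∈ τ, s ≤ T) (hB : ∀ m, ∃ n < B, windowPattern x τ n = windowPattern x τ m) :
    (patternSet x τ).ncard ≤
      (range (windowPair x τ M) ∩ Prod.snd ⁻¹' {Function.const τ z}).ncard := by
  refine ncard_le_ncard_of_injOn (fun w => (w, Function.const τ z)) ?_
    (Prod.mk_left_injective _).injOn (toFinite _)
  rintro _ ⟨m, rfl⟩
  obtain ⟨n, hn, hnm⟩ := hB m
  refine ⟨⟨n, Prod.ext hnm (funext fun s => ?_)⟩, rfl⟩
  have := hT s s.2
  have := h.le_length
  simpa only [windowPair, windowPattern, Function.const, Nat.add_assoc]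
    using h.run (n + s) (by omega)

theorem endPattern_self_ne (h : IsSeparatingShift x z B T M a e) (hT : ∀ s ∈ τ, s ≤ T) (t : τ) :
    endPattern x τ T M a t t ≠ z := by
  have := hT t t.2
  simpa only [endPattern, windowPattern, Nat.add_assoc, Nat.sub_add_cancel this] using h.run_end

theorem endPattern_eq_of_lt (h : IsSeparatingShift x z B T M a e) (hT : ∀ s ∈ τ, s ≤ T) {s t : τ}
    (hst : s < t) : endPattern x τ T M a t s = z := by
  have := hT t t.2
  have : (s : ℕ) < t := hst
  simpa only [endPattern, windowPattern, Nat.add_assoc] using h.run (a + (T - t + s)) (by omega)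

theorem endPattern_injective (h : IsSeparatingShift x z B T M a e) (hT : ∀ s ∈ τ, s ≤ T) :
    Function.Injective (endPattern x τ T M a) :=
  Function.Injective.of_lt_imp_ne fun s _ hst heq =>
    h.endPattern_self_ne hT s (heq ▸ h.endPattern_eq_of_lt hT hst)

theorem endPattern_fiber_nontrivial (h : IsSeparatingShift x z B T M a e) (hT : ∀ s ∈ τ, s ≤ T)
    (t : τ) :
    (range (windowPair x τ M) ∩ Prod.snd ⁻¹' {endPattern x τ T M a t}).Nontrivial := by
  have htT := hT t t.2
  refine ⟨_, ⟨mem_range_self (a + (T - t)), rfl⟩, _, ⟨mem_range_self (e + (T - t)), ?_⟩, ?_⟩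
  · refine funext fun s => ?_
    have := hT s s.2
    simpa only [windowPair, endPattern, windowPattern, Nat.add_assoc]
      using h.recur (T - t + s) (by omega)
  · intro heq
    have := congrFun (congrArg Prod.fst heq) t
    simp only [windowPair, windowPattern, Nat.add_assoc, Nat.sub_add_cancel htT] at this
    exact h.separated this.symm

end IsSeparatingShift

theorem IsRecurrentWord.exists_doubled_window [Finite α] {x : ℕ → α} {z : α}
    (hx : IsRecurrentWord x) (hz : HasLongRuns x z) (τ : Finset ℕ) :
    ∃ σ : Finset ℕ, σ.card = 2 * τ.card ∧
      2 * (patternSet x τ).ncard + τ.card ≤ (patternSet x σ).ncard + 1 := by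
  obtain ⟨T, hT⟩ : ∃ T, ∀ s ∈ τ, s ≤ T := ⟨τ.sup id, fun _ hs => Finset.le_sup (f := id) hs⟩
  obtain ⟨B, hB⟩ := exists_forall_exists_lt_apply_eq (windowPattern x τ)
  obtain ⟨M, a, e, h⟩ := hx.exists_isSeparatingShift hz B T
  refine ⟨τ ∪ τ.image (M + ·),
    card_union_image_add fun s hs => (hT s hs).trans_lt h.lt_shift, ?_⟩
  have hconst : Function.const τ z ∉ range (endPattern x τ T M a) := by
    rintro ⟨t, ht⟩
    exact h.endPattern_self_ne hT t (congrFun ht t)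
  have hcount := ncard_fiber_add_ncard_image_add_ncard_le (toFinite _) Prod.snd hconst
    (forall_mem_range.2 (h.endPattern_fiber_nontrivial hT))
  rw [hx.image_snd_range_windowPair, ncard_range_of_injective (h.endPattern_injective hT),
    Nat.card_eq_fintype_card, Fintype.card_coe] at hcount
  have hfiber := h.ncard_patternSet_le_ncard_fiber hT hB
  have hpair := ncard_range_windowPair_le x τ M
  omega

theorem IsRecurrentWord.exists_window_card_eq_two_pow [Finite α] {x : ℕ → α} {z : α}
    (hx : IsRecurrentWord x) (hz : HasLongRuns x z) (k : ℕ) :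
    ∃ τ : Finset ℕ, τ.card = 2 ^ k ∧ k * 2 ^ k + 2 ≤ 2 * (patternSet x τ).ncard := by
  induction k with
  | zero =>
    have : 0 < (patternSet x {0}).ncard := (ncard_pos (toFinite _)).2 (range_nonempty _)
    exact ⟨{0}, rfl, by omega⟩
  | succ k ih =>
    obtain ⟨τ, hτ, hk⟩ := ih
    obtain ⟨σ, hσ, hστ⟩ := hx.exists_doubled_window hz τ
    refine ⟨σ, by rw [hσ, hτ, pow_succ'], ?_⟩
    rw [hτ] at hστ
    rw [pow_succ', show (k + 1) * (2 * 2 ^ k) = 2 * (k * 2 ^ k) + 2 * 2 ^ k by ring]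
    omega

open Pointwise in
theorem IsRecurrentWord.exists_mul_two_pow_le_maxPatternComplexity [Finite α] {x : ℕ → α}
    (hx : IsRecurrentWord x) (hnur : ¬ IsUniformlyRecurrentWord x) :
    ∃ L, ∀ k n, 2 ^ k * L ≤ n → k * 2 ^ k ≤ 2 * maxPatternComplexity x n := by
  obtain ⟨L, hL⟩ := hx.exists_hasLongRuns_prefixOccurrence hnur
  refine ⟨L, fun k n hn => ?_⟩
  have hocc : IsRecurrentWord (prefixOccurrence x L) := hx.blockCode _
  obtain ⟨τ, hτ, hk⟩ := hocc.exists_window_card_eq_two_pow hL k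
  have hcode : (patternSet (prefixOccurrence x L) τ).ncard ≤
      (patternSet x (τ + Finset.range L)).ncard := ncard_patternSet_blockCode_le _ x τ
  have hcard : (τ + Finset.range L).card ≤ n := by
    refine Finset.card_add_le.trans ?_
    rwa [hτ, Finset.card_range]
  have hmax := ncard_patternSet_le_maxPatternComplexity x hcard
  omega

end Words

theorem log_le_two_mul_of_le_two_pow_mul {C k n : ℕ} (hn : 0 < n) (hnC : n ≤ 2 ^ (k + 1) * C)
    (hCk : C ≤ k) : Real.log n ≤ 2 * k := by
  have hC : (0 : ℝ) < C := by exact_mod_cast Nat.pos_of_mul_pos_left (hn.trans_le hnC)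
  have hlog₂ : Real.log 2 ≤ 1 := (Real.log_le_sub_one_of_pos two_pos).trans_eq (by norm_num)
  calc Real.log n ≤ Real.log (2 ^ (k + 1) * C) :=
        Real.log_le_log (by exact_mod_cast hn) (by exact_mod_cast hnC)
    _ = (k + 1) * Real.log 2 + Real.log C := by
        rw [Real.log_mul (by positivity) hC.ne', Real.log_pow, Nat.cast_succ]
    _ ≤ (k + 1) * 1 + (k - 1) := by
        gcongr
        exact (Real.log_le_sub_one_of_pos hC).trans (by gcongr)
    _ = 2 * k := by ring

theorem exists_mul_log_le_of_mul_two_pow_le {p : ℕ → ℕ} {L : ℕ}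
    (hp : ∀ k n, 2 ^ k * L ≤ n → k * 2 ^ k ≤ 2 * p n) :
    ∃ c : ℝ, 0 < c ∧ ∃ N : ℕ, ∀ n : ℕ, N ≤ n → c * (n : ℝ) * Real.log n ≤ (p n : ℝ) := by
  obtain ⟨C, hLC, hC⟩ : ∃ C, L ≤ C ∧ 0 < C := ⟨L + 1, L.le_succ, L.succ_pos⟩
  refine ⟨1 / (8 * C), by positivity, 2 ^ C * C, fun n hn => ?_⟩
  have hn₀ : 0 < n := lt_of_lt_of_le (by positivity) hn
  have hCn : 2 ^ C ≤ n / C := (Nat.le_div_iff_mul_le hC).2 hn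
  have hnC₀ : n / C ≠ 0 := (lt_of_lt_of_le (by positivity) hCn).ne'
  obtain ⟨k, hk⟩ : ∃ k, Nat.log 2 (n / C) = k := ⟨_, rfl⟩
  have hCk : C ≤ k := hk ▸ Nat.le_log_of_pow_le one_lt_two hCn
  have hkn : 2 ^ k * C ≤ n := (Nat.le_div_iff_mul_le hC).1 (hk ▸ Nat.pow_log_le_self 2 hnC₀)
  have hnk : n ≤ 2 ^ (k + 1) * C :=
    ((Nat.div_lt_iff_lt_mul hC).1 (hk ▸ Nat.lt_pow_succ_log_self one_lt_two _)).le
  have hpk : (k * 2 ^ k : ℝ) ≤ 2 * p n := by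
    exact_mod_cast hp k n ((Nat.mul_le_mul_left _ hLC).trans hkn)
  rw [mul_assoc, one_div, inv_mul_le_iff₀ (by positivity)]
  calc (n : ℝ) * Real.log n ≤ (2 ^ (k + 1) * C) * (2 * k) := by
        gcongr
        · exact_mod_cast hnk
        · exact_mod_cast log_le_two_mul_of_le_two_pow_mul hn₀ hnk hCk
    _ = 4 * C * (k * 2 ^ k) := by ring
    _ ≤ 4 * C * (2 * p n) := by gcongr
    _ = 8 * C * p n := by ring

theorem stmt2_general {α : Type*} [Finite α] (x : ℕ → α) (hrec : IsRecurrentWord x)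
    (hnur : ¬ IsUniformlyRecurrentWord x) :
    ∃ c : ℝ, 0 < c ∧ ∃ N : ℕ, ∀ n : ℕ, N ≤ n →
      c * (n : ℝ) * Real.log n ≤ (maxPatternComplexity x n : ℝ) := by
  obtain ⟨L, hL⟩ := hrec.exists_mul_two_pow_le_maxPatternComplexity hnur
  exact exists_mul_log_le_of_mul_two_pow_le hL

theorem patLang_eq_patternSet (x : Seq2) (τ : Finset ℕ) : patLang x τ = patternSet x τ :=
  ext fun _ => exists_congr fun _ => funext_iff.symm.trans eq_comm

theorem pstar_eq_maxPatternComplexity (x : Seq2) (n : ℕ) :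
    pstar x n = maxPatternComplexity x n := by
  simp only [pstar, maxPatternComplexity, patLang_eq_patternSet]

/-- if `x` is recurrent but not uniformly recurrent, then
`liminf pstar x n / (n log n) > 0`, i.e. there are `c > 0` and `N` with
`pstar x n ≥ c * n * log n` for all `n ≥ N`. -/
theorem stmt2 (x : Seq2) (hrec : Recurrent x) (hnur : ¬ UniformlyRecurrent x) :
    ∃ c : ℝ, 0 < c ∧ ∃ N : ℕ, ∀ n : ℕ, N ≤ n →
      c * (n : ℝ) * Real.log n ≤ (pstar x n : ℝ) := by
  simpa only [pstar_eq_maxPatternComplexity] using stmt2_general x hrec hnur
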